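/- arXiv:1812.07389 — 8 statements merged into one kernel-verified Lean document; each statement's English description precedes it below -/
import Mathlib

section
/- Let H1 and H_LI be independent exponentially distributed random variables with means Ω1 > 0 and Ω_LI > 0. Fix ρ > 0, thresholds γ1 > 0 and γ2 > 0 with a2 > a1·γ2, and set θ1 = max( γ2/(ρ(a2 − a1·γ2)), γ1/(a1·ρ) ). Then the full-duplex outage probability of the near user, P_out = 1 − P( a2·ρ·H1/(a1·ρ·H1 + ρ·H_LI + 1) > γ2 and a1·ρ·H1/(ρ·H_LI + 1) > γ1 ), satisfies P_out = 1 − (Ω1/(Ω1 + ρ·θ1·Ω_LI))·exp(−θ1/Ω1). -/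
open MeasureTheory ProbabilityTheory Real

/-!
Almost surely both gains are positive, and then both SINR requirements are linear in `H1`: together
they say `θ1 * (ρ * HLI + 1) < H1`. Since `H1` has an exponential survival function, independence
turns the probability of this event into `E[exp (-θ1 * (ρ * HLI + 1) / Ω1)]`, which is a value of
the moment generating function of the exponential variable `HLI`.
-/

section ExponentialLaw

variable {r t : ℝ}

lemma integral_exponentialPDFReal_eq_one (hr : 0 < r) : ∫ x, exponentialPDFReal r x = 1 := by
  rw [integral_eq_lintegral_of_nonneg_ae (ae_of_all _ (exponentialPDFReal_nonneg hr))
    (by fun_prop)]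
  change (∫⁻ x, exponentialPDF r x).toReal = 1
  rw [lintegral_exponentialPDF_eq_one hr, ENNReal.toReal_one]

lemma exponentialPDFReal_eq_ite (r x : ℝ) :
    exponentialPDFReal r x = if 0 ≤ x then r * exp (-(r * x)) else 0 := by
  simp [exponentialPDFReal, gammaPDFReal]

lemma exponentialPDFReal_mul_exp (hrt : r ≠ t) (x : ℝ) :
    exponentialPDFReal r x * exp (t * x) = r / (r - t) * exponentialPDFReal (r - t) x := by
  have hrt' : r - t ≠ 0 := sub_ne_zero.2 hrt
  have hexp : exp (-((r - t) * x)) = exp (-(r * x)) * exp (t * x) := by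
    rw [← exp_add]
    ring_nf
  simp only [exponentialPDFReal_eq_ite, hexp]
  split_ifs
  · field_simp
  · simp

lemma integral_expMeasure {E : Type*} [NormedAddCommGroup E] [NormedSpace ℝ E] (hr : 0 < r)
    (g : ℝ → E) : ∫ x, g x ∂expMeasure r = ∫ x, exponentialPDFReal r x • g x := by
  have hpdf : Measurable (exponentialPDF r) :=
    (measurable_exponentialPDFReal r).ennreal_ofReal
  change ∫ x, g x ∂volume.withDensity (exponentialPDF r) = _
  rw [integral_withDensity_eq_integral_toReal_smul hpdf (ae_of_all _ fun _ ↦ ENNReal.ofReal_lt_top)]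
  simp only [exponentialPDF, ENNReal.toReal_ofReal (exponentialPDFReal_nonneg hr _)]

lemma mgf_id_expMeasure (hr : 0 < r) (ht : t < r) : mgf id (expMeasure r) t = r / (r - t) := by
  simp only [mgf, id, integral_expMeasure hr, smul_eq_mul, exponentialPDFReal_mul_exp ht.ne',
    integral_const_mul, integral_exponentialPDFReal_eq_one (sub_pos.2 ht), mul_one]

lemma measureReal_expMeasure_Ioi (hr : 0 < r) (ht : 0 ≤ t) :
    (expMeasure r).real (Set.Ioi t) = exp (-(r * t)) := by
  have := isProbabilityMeasure_expMeasure hr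
  rw [← Set.compl_Iic, probReal_compl_eq_one_sub measurableSet_Iic, ← cdf_eq_real,
    cdf_expMeasure_eq hr, if_pos ht, sub_sub_cancel]

lemma ae_pos_expMeasure (hr : 0 < r) : ∀ᵐ x ∂expMeasure r, 0 < x := by
  have := isProbabilityMeasure_expMeasure hr
  refine (mem_ae_iff_prob_eq_one measurableSet_Ioi).2 ?_
  rw [← ofReal_measureReal, measureReal_expMeasure_Ioi hr le_rfl, mul_zero, neg_zero, exp_zero,
    ENNReal.ofReal_one]

lemma eq_expMeasure_of_measureReal_Ioi {ν : Measure ℝ} [IsProbabilityMeasure ν] (hr : 0 < r)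
    (hν : ∀ t, 0 ≤ t → ν.real (Set.Ioi t) = exp (-(r * t))) : ν = expMeasure r := by
  have := isProbabilityMeasure_expMeasure hr
  have cdf_of_nonneg {t : ℝ} (ht : 0 ≤ t) : cdf ν t = 1 - exp (-(r * t)) := by
    rw [cdf_eq_real, ← hν t ht, ← Set.compl_Ioi, probReal_compl_eq_one_sub measurableSet_Ioi]
  have cdf_zero : cdf ν 0 = 0 := by simp [cdf_of_nonneg le_rfl]
  refine Measure.eq_of_cdf _ _ (StieltjesFunction.ext fun t ↦ ?_)
  rw [cdf_expMeasure_eq hr]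
  split_ifs with ht
  · exact cdf_of_nonneg ht
  · exact le_antisymm (cdf_zero ▸ monotone_cdf ν (not_le.1 ht).le) (cdf_nonneg ν t)

end ExponentialLaw

section ExponentialVariable

variable {Ω : Type*} [MeasurableSpace Ω] {μ : Measure Ω} {X Y : Ω → ℝ} {r s t c d : ℝ}

lemma hasLaw_expMeasure_of_measure_gt [IsProbabilityMeasure μ] (hr : 0 < r) (hX : AEMeasurable X μ)
    (hsurv : ∀ t, 0 ≤ t → μ {ω | X ω > t} = ENNReal.ofReal (exp (-(r * t)))) :
    HasLaw X (expMeasure r) μ where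
  aemeasurable := hX
  map_eq := by
    have := Measure.isProbabilityMeasure_map hX
    refine eq_expMeasure_of_measureReal_Ioi hr fun t ht ↦ ?_
    rw [map_measureReal_apply_of_aemeasurable hX measurableSet_Ioi]
    exact (congrArg ENNReal.toReal (hsurv t ht)).trans (ENNReal.toReal_ofReal (exp_pos _).le)

lemma ae_pos_of_hasLaw_expMeasure (hr : 0 < r) (hX : HasLaw X (expMeasure r) μ) :
    ∀ᵐ ω ∂μ, 0 < X ω :=
  (hX.ae_iff (by fun_prop)).2 (ae_pos_expMeasure hr)

lemma mgf_of_hasLaw_expMeasure (hr : 0 < r) (ht : t < r) (hX : HasLaw X (expMeasure r) μ) :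
    mgf X μ t = r / (r - t) := by
  rw [← mgf_id_map hX.aemeasurable, hX.map_eq, mgf_id_expMeasure hr ht]

lemma measureReal_lt_eq_integral_of_indepFun [IsFiniteMeasure μ] (hX : AEMeasurable X μ)
    (hY : AEMeasurable Y μ) (hXY : IndepFun X Y μ) :
    μ.real {ω | Y ω < X ω} = ∫ ω, (μ.map X).real (Set.Ioi (Y ω)) ∂μ := by
  have hS : MeasurableSet {p : ℝ × ℝ | p.1 < p.2} := measurableSet_lt measurable_fst measurable_snd
  have hsec : Measurable fun y ↦ μ.map X (Set.Ioi y) := measurable_measure_prodMk_left hS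
  calc μ.real {ω | Y ω < X ω}
      = (μ.map fun ω ↦ (Y ω, X ω)).real {p | p.1 < p.2} :=
        (map_measureReal_apply_of_aemeasurable (hY.prodMk hX) hS).symm
    _ = (∫⁻ y, μ.map X (Set.Ioi y) ∂μ.map Y).toReal := by
        rw [hXY.symm.map_prod_eq_prod_map_map hY hX, measureReal_def, Measure.prod_apply hS]
        rfl
    _ = ∫ y, (μ.map X).real (Set.Ioi y) ∂μ.map Y :=
        (integral_toReal hsec.aemeasurable (ae_of_all _ fun _ ↦ measure_lt_top _ _)).symm
    _ = ∫ ω, (μ.map X).real (Set.Ioi (Y ω)) ∂μ :=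
        integral_map hY hsec.ennreal_toReal.aestronglyMeasurable

lemma measureReal_lt_eq_mgf_of_hasLaw_expMeasure (hr : 0 < r) (hX : HasLaw X (expMeasure r) μ)
    (hY : AEMeasurable Y μ) (hY_nonneg : ∀ᵐ ω ∂μ, 0 ≤ Y ω) (hXY : IndepFun X Y μ) :
    μ.real {ω | Y ω < X ω} = mgf Y μ (-r) := by
  have := hX.isProbabilityMeasure_iff.2 (isProbabilityMeasure_expMeasure hr)
  rw [measureReal_lt_eq_integral_of_indepFun hX.aemeasurable hY hXY, hX.map_eq]
  refine integral_congr_ae ?_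
  filter_upwards [hY_nonneg] with ω hω
  rw [measureReal_expMeasure_Ioi hr hω, neg_mul]

lemma measureReal_mul_add_lt_of_hasLaw_expMeasure (hr : 0 < r) (hs : 0 < s) (hc : 0 ≤ c)
    (hd : 0 ≤ d) (hX : HasLaw X (expMeasure r) μ) (hY : HasLaw Y (expMeasure s) μ)
    (hXY : IndepFun X Y μ) :
    μ.real {ω | c * Y ω + d < X ω} = s / (s + r * c) * exp (-(r * d)) := by
  have hY_nonneg : ∀ᵐ ω ∂μ, 0 ≤ c * Y ω + d := by
    filter_upwards [ae_pos_of_hasLaw_expMeasure hs hY] with ω hω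
    positivity
  have hrate : c * -r < s := by linarith [mul_nonneg hc hr.le]
  rw [measureReal_lt_eq_mgf_of_hasLaw_expMeasure hr hX (by fun_prop) hY_nonneg
    (hXY.comp (φ := id) (ψ := fun y ↦ c * y + d) measurable_id (by fun_prop)),
    mgf_add_const, mgf_const_mul, mgf_of_hasLaw_expMeasure hs hrate hY]
  ring_nf

end ExponentialVariable

section Decoding

variable {𝕜 : Type*} [Field 𝕜] [LinearOrder 𝕜] [IsStrictOrderedRing 𝕜]

lemma lt_mul_div_mul_add_iff {γ p q h w : 𝕜} (hw : 0 < q * h + w) (hpq : q * γ < p) :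
    γ < p * h / (q * h + w) ↔ γ / (p - q * γ) * w < h := by
  rw [lt_div_iff₀ hw, div_mul_eq_mul_div, div_lt_iff₀ (sub_pos.2 hpq)]
  constructor <;> intro <;> linarith

lemma lt_sinr_and_lt_sinr_iff {ρ γ1 γ2 a1 a2 h z : 𝕜} (hρ : 0 < ρ) (ha1 : 0 < a1)
    (ha : a1 * γ2 < a2) (hh : 0 ≤ h) (hz : 0 ≤ z) :
    γ2 < a2 * ρ * h / (a1 * ρ * h + ρ * z + 1) ∧ γ1 < a1 * ρ * h / (ρ * z + 1) ↔
      max (γ2 / (ρ * (a2 - a1 * γ2))) (γ1 / (a1 * ρ)) * (ρ * z + 1) < h := by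
  have hnoise : 0 < ρ * z + 1 := by positivity
  have hpower : a1 * ρ * γ2 < a2 * ρ := by
    linarith [mul_lt_mul_of_pos_right ha hρ]
  have hfar : γ2 < a2 * ρ * h / (a1 * ρ * h + ρ * z + 1) ↔
      γ2 / (ρ * (a2 - a1 * γ2)) * (ρ * z + 1) < h := by
    rw [add_assoc, lt_mul_div_mul_add_iff (by positivity) hpower]
    ring_nf
  have hnear : γ1 < a1 * ρ * h / (ρ * z + 1) ↔ γ1 / (a1 * ρ) * (ρ * z + 1) < h := by
    simpa using lt_mul_div_mul_add_iff (γ := γ1) (p := a1 * ρ) (q := 0) (h := h)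
      (by simpa using hnoise) (by simpa using mul_pos ha1 hρ)
  rw [hfar, hnear, max_mul_of_nonneg _ _ hnoise.le, max_lt_iff]

end Decoding

/-- **FD near-user outage probability (Theorem 1).**
If `H1` and `HLI` are independent exponential random variables with means `Ω1` and `ΩLI`
(characterized by their survival functions), then the full-duplex outage probability of the
near user has the stated closed form. -/
theorem fd_near_user_outage
    {Ω : Type*} [MeasurableSpace Ω] (μ : Measure Ω) [IsProbabilityMeasure μ]
    (H1 HLI : Ω → ℝ) (hH1m : Measurable H1) (hHLIm : Measurable HLI)
    (Ω1 ΩLI : ℝ) (hΩ1 : 0 < Ω1) (hΩLI : 0 < ΩLI)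
    (hH1 : ∀ t : ℝ, 0 ≤ t → μ {ω | H1 ω > t} = ENNReal.ofReal (Real.exp (-(t / Ω1))))
    (hHLI : ∀ t : ℝ, 0 ≤ t → μ {ω | HLI ω > t} = ENNReal.ofReal (Real.exp (-(t / ΩLI))))
    (hIndep : IndepFun H1 HLI μ)
    (ρ γ1 γ2 a1 a2 : ℝ) (hρ : 0 < ρ) (hγ1 : 0 < γ1) (hγ2 : 0 < γ2)
    (ha1 : 0 < a1) (ha : a1 * γ2 < a2)
    (θ1 : ℝ) (hθ1 : θ1 = max (γ2 / (ρ * (a2 - a1 * γ2))) (γ1 / (a1 * ρ))) :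
    1 - (μ {ω | a2 * ρ * H1 ω / (a1 * ρ * H1 ω + ρ * HLI ω + 1) > γ2 ∧
          a1 * ρ * H1 ω / (ρ * HLI ω + 1) > γ1}).toReal
      = 1 - Ω1 / (Ω1 + ρ * θ1 * ΩLI) * Real.exp (-(θ1 / Ω1)) := by
  have hH1_law : HasLaw H1 (expMeasure Ω1⁻¹) μ :=
    hasLaw_expMeasure_of_measure_gt (inv_pos.2 hΩ1) hH1m.aemeasurable
      (by simpa only [div_eq_inv_mul] using hH1)
  have hHLI_law : HasLaw HLI (expMeasure ΩLI⁻¹) μ :=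
    hasLaw_expMeasure_of_measure_gt (inv_pos.2 hΩLI) hHLIm.aemeasurable
      (by simpa only [div_eq_inv_mul] using hHLI)
  have hθ1_pos : 0 < θ1 := hθ1 ▸ lt_max_of_lt_right (by positivity)
  have hdecode : {ω | a2 * ρ * H1 ω / (a1 * ρ * H1 ω + ρ * HLI ω + 1) > γ2 ∧
      a1 * ρ * H1 ω / (ρ * HLI ω + 1) > γ1} =ᵐ[μ] {ω | θ1 * ρ * HLI ω + θ1 < H1 ω} := by
    filter_upwards [ae_pos_of_hasLaw_expMeasure (inv_pos.2 hΩ1) hH1_law,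
      ae_pos_of_hasLaw_expMeasure (inv_pos.2 hΩLI) hHLI_law] with ω hh hz
    have hiff := lt_sinr_and_lt_sinr_iff (γ1 := γ1) hρ ha1 ha hh.le hz.le
    rw [← hθ1, mul_add, mul_one, ← mul_assoc] at hiff
    exact propext hiff
  rw [← measureReal_def, measureReal_congr hdecode,
    measureReal_mul_add_lt_of_hasLaw_expMeasure (inv_pos.2 hΩ1) (inv_pos.2 hΩLI)
      (by positivity) hθ1_pos.le hH1_law hHLI_law hIndep, ← div_eq_inv_mul θ1]
  congr 2
  field_simp
end

section
/- Let H1 be an exponentially distributed random variable with mean Ω1 > 0. Fix ρ > 0, thresholds γ1 > 0 and γ2 > 0 with a2 > a1·γ2, and set θ2 = max( γ2/(ρ(a2 − a1·γ2)), γ1/(a1·ρ) ). Then the half-duplex outage probability of the near user, P_out = 1 − P( a2·ρ·H1/(a1·ρ·H1 + 1) > γ2 and a1·ρ·H1 > γ1 ), satisfies P_out = 1 − exp(−θ2/Ω1). -/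
open MeasureTheory ProbabilityTheory Real

/-! Where its denominator is positive, an SINR `s * h / (i * h + n)` exceeds `γ` exactly when the
gain `h` exceeds `γ * n / (s - i * γ)`, so both decoding conditions are lower bounds on the channel
gain and their conjunction is a lower bound by `θ2`. The denominator could only fail to be positive
at negative gains, which the SNR condition excludes. -/

section Decoding

variable {K : Type*} [Field K] [LinearOrder K] [IsStrictOrderedRing K]

lemma lt_mul_div_mul_add_iff_s1 {s i n γ h : K} (hs : 0 < s - i * γ) (hn : 0 < i * h + n) :
    γ < s * h / (i * h + n) ↔ γ * n / (s - i * γ) < h :=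
  calc γ < s * h / (i * h + n)
    _ ↔ γ * (i * h + n) < s * h := lt_div_iff₀ hn
    _ ↔ γ * n < h * (s - i * γ) := by constructor <;> intro _ <;> linarith
    _ ↔ γ * n / (s - i * γ) < h := (div_lt_iff₀ hs).symm

lemma lt_sinr_and_lt_snr_iff_max_lt {ρ γ1 γ2 a1 a2 h : K} (hρ : 0 < ρ) (hγ1 : 0 ≤ γ1)
    (ha1 : 0 < a1) (ha : a1 * γ2 < a2) :
    γ2 < a2 * ρ * h / (a1 * ρ * h + 1) ∧ γ1 < a1 * ρ * h ↔
      max (γ2 / (ρ * (a2 - a1 * γ2))) (γ1 / (a1 * ρ)) < h := by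
  have hsnr : γ1 < a1 * ρ * h ↔ γ1 / (a1 * ρ) < h := (div_lt_iff₀' (mul_pos ha1 hρ)).symm
  have hfactor : a2 * ρ - a1 * ρ * γ2 = ρ * (a2 - a1 * γ2) := by ring
  have hgap : 0 < a2 * ρ - a1 * ρ * γ2 := hfactor ▸ mul_pos hρ (sub_pos.2 ha)
  have hsinr (hh : γ1 < a1 * ρ * h) :
      γ2 < a2 * ρ * h / (a1 * ρ * h + 1) ↔ γ2 / (ρ * (a2 - a1 * γ2)) < h := by
    have hden : 0 < a1 * ρ * h + 1 := by linarith
    rw [lt_mul_div_mul_add_iff_s1 hgap hden, mul_one, hfactor]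
  rw [and_congr_left hsinr, hsnr, max_lt_iff]

end Decoding

/-- **HD near-user outage probability (Corollary 1).**
If `H1` is an exponential random variable with mean `Ω1` (characterized by its survival
function), then the half-duplex outage probability of the near user has the stated
closed form. -/
theorem hd_near_user_outage
    {Ω : Type*} [MeasurableSpace Ω] (μ : Measure Ω) [IsProbabilityMeasure μ]
    (H1 : Ω → ℝ) (hH1m : Measurable H1)
    (Ω1 : ℝ) (hΩ1 : 0 < Ω1)
    (hH1 : ∀ t : ℝ, 0 ≤ t → μ {ω | H1 ω > t} = ENNReal.ofReal (Real.exp (-(t / Ω1))))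
    (ρ γ1 γ2 a1 a2 : ℝ) (hρ : 0 < ρ) (hγ1 : 0 < γ1) (hγ2 : 0 < γ2)
    (ha1 : 0 < a1) (ha : a1 * γ2 < a2)
    (θ2 : ℝ) (hθ2 : θ2 = max (γ2 / (ρ * (a2 - a1 * γ2))) (γ1 / (a1 * ρ))) :
    1 - (μ {ω | a2 * ρ * H1 ω / (a1 * ρ * H1 ω + 1) > γ2 ∧ a1 * ρ * H1 ω > γ1}).toReal
      = 1 - Real.exp (-(θ2 / Ω1)) := by
  have hevent : {ω | a2 * ρ * H1 ω / (a1 * ρ * H1 ω + 1) > γ2 ∧ a1 * ρ * H1 ω > γ1}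
      = {ω | H1 ω > θ2} :=
    hθ2 ▸ Set.ext fun _ ↦ lt_sinr_and_lt_snr_iff_max_lt hρ hγ1.le ha1 ha
  have hθ2_nonneg : 0 ≤ θ2 := hθ2 ▸ le_max_of_le_right (by positivity)
  rw [hevent, hH1 θ2 hθ2_nonneg, ENNReal.toReal_ofReal (exp_nonneg _)]
end

section
/- Let H1 and H2 be independent exponentially distributed random variables with means Ω1, Ω2 > 0. Fix ρ > 0 and a threshold γ2 > 0 with a2 > a1·γ2, and set τ2 = γ2/(ρ(a2 − a1·γ2)). Let γ_rel = a2·ρ·H1/(a1·ρ·H1 + 1). Then the half-duplex outage probability of the far user without direct link, P_out = P(γ_rel < γ2) + P( ρ·H2 < γ2 and γ_rel > γ2 ), satisfies P_out = 1 − exp(−τ2/Ω1 − γ2/(ρ·Ω2)). -/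
open MeasureTheory ProbabilityTheory Real

/-!
The relaying SINR `a₂ρh / (a₁ρh + 1)` is increasing in the gain `h ≥ 0` and crosses the level `γ`
at `τ = γ / (ρ(a₂ - a₁γ))`, so up to null sets the two outage events are `H₁ < τ` and
`τ < H₁, H₂ < γ/ρ`. They are disjoint, and when `H₁` has no atom at `τ` they exhaust the complement
of `{τ < H₁} ∩ {γ/ρ ≤ H₂}`, whose probability is a product of two tails by independence.
-/

open Set Filter
open scoped Topology

section Tails

variable {Ω R S : Type*} [MeasurableSpace Ω] {μ : Measure Ω} [LinearOrder R] [LinearOrder S]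

lemma measureReal_le_eq_measureReal_lt {X : Ω → R} {t : R} (ht : μ {ω | X ω = t} = 0) :
    μ.real {ω | t ≤ X ω} = μ.real {ω | t < X ω} := by
  have hne : ∀ᵐ ω ∂μ, X ω ≠ t := by simpa only [ae_iff, not_not] using ht
  refine measureReal_congr ?_
  filter_upwards [hne] with ω hω
  exact propext hω.symm.le_iff_lt

variable [TopologicalSpace R] [OrderClosedTopology R] [MeasurableSpace R] [OpensMeasurableSpace R]

lemma measure_setOf_eq_eq_zero_of_continuousWithinAt_tail [IsFiniteMeasure μ] {X : Ω → R}
    (hX : AEMeasurable X μ) {t : R} [(𝓝[<] t).NeBot]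
    (htail : ContinuousWithinAt (fun s ↦ μ.real {ω | s < X ω}) (Iio t) t) :
    μ {ω | X ω = t} = 0 := by
  have hmeas : NullMeasurableSet {ω | t < X ω} μ := hX.nullMeasurable measurableSet_Ioi
  have hdisj : Disjoint {ω | X ω = t} {ω | t < X ω} :=
    disjoint_left.2 fun _ heq hlt ↦ hlt.ne' heq
  have hle : ∀ᶠ s in 𝓝[<] t,
      μ.real {ω | X ω = t} + μ.real {ω | t < X ω} ≤ μ.real {ω | s < X ω} := by
    filter_upwards [self_mem_nhdsWithin] with s (hs : s < t)
    rw [← measureReal_union₀ hmeas hdisj.aedisjoint]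
    exact measureReal_mono (union_subset (fun _ heq ↦ hs.trans_eq (Eq.symm heq))
      fun _ hlt ↦ hs.trans hlt)
  have hlim := ge_of_tendsto htail hle
  exact (measureReal_eq_zero_iff).1 (le_antisymm (by linarith) measureReal_nonneg)

lemma measureReal_lt_eq_one_sub_measureReal_le [IsProbabilityMeasure μ] {X : Ω → R}
    (hX : AEMeasurable X μ) (t : R) :
    μ.real {ω | X ω < t} = 1 - μ.real {ω | t ≤ X ω} := by
  have hmeas : NullMeasurableSet {ω | t ≤ X ω} μ := hX.nullMeasurable measurableSet_Ici
  rw [← probReal_compl_eq_one_sub₀ hmeas]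
  simp only [compl_ofPred, not_le]

variable [TopologicalSpace S] [OrderClosedTopology S] [MeasurableSpace S] [OpensMeasurableSpace S]

lemma measureReal_lt_add_measureReal_lt_and_lt [IsProbabilityMeasure μ] {X : Ω → R} {Y : Ω → S}
    (hX : AEMeasurable X μ) (hY : AEMeasurable Y μ) (hXY : IndepFun X Y μ) {s : R}
    (hs : μ {ω | X ω = s} = 0) (t : S) :
    μ.real {ω | X ω < s} + μ.real {ω | Y ω < t ∧ s < X ω}
      = 1 - μ.real {ω | s < X ω} * μ.real {ω | t ≤ Y ω} := by
  have hprod : μ.real {ω | Y ω < t ∧ s < X ω} = μ.real {ω | Y ω < t} * μ.real {ω | s < X ω} := by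
    simp only [measureReal_def, ← ENNReal.toReal_mul]
    exact congrArg ENNReal.toReal
      (hXY.symm.measure_inter_preimage_eq_mul _ _ measurableSet_Iio measurableSet_Ioi)
  rw [hprod, measureReal_lt_eq_one_sub_measureReal_le hX,
    measureReal_lt_eq_one_sub_measureReal_le hY, measureReal_le_eq_measureReal_lt hs]
  ring

end Tails

section ExponentialTail

variable {Ω : Type*} [MeasurableSpace Ω] {μ : Measure Ω} {X : Ω → ℝ} {m : ℝ}

lemma measureReal_lt_of_exp_tail
    (htail : ∀ t, 0 ≤ t → μ {ω | t < X ω} = ENNReal.ofReal (exp (-(t / m)))) {t : ℝ} (ht : 0 ≤ t) :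
    μ.real {ω | t < X ω} = exp (-(t / m)) := by
  rw [measureReal_def, htail t ht, ENNReal.toReal_ofReal (exp_nonneg _)]

lemma measure_setOf_eq_eq_zero_of_exp_tail [IsFiniteMeasure μ] (hX : AEMeasurable X μ)
    (htail : ∀ t, 0 ≤ t → μ {ω | t < X ω} = ENNReal.ofReal (exp (-(t / m)))) {t : ℝ} (ht : 0 < t) :
    μ {ω | X ω = t} = 0 := by
  have hcont : Continuous fun s : ℝ ↦ exp (-(s / m)) := by fun_prop
  have heq : (fun s ↦ μ.real {ω | s < X ω}) =ᶠ[𝓝 t] fun s ↦ exp (-(s / m)) := by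
    filter_upwards [Ioi_mem_nhds ht] with s hs
    exact measureReal_lt_of_exp_tail htail (le_of_lt hs)
  exact measure_setOf_eq_eq_zero_of_continuousWithinAt_tail hX
    (hcont.continuousAt.congr heq.symm).continuousWithinAt

lemma ae_pos_of_exp_tail [IsProbabilityMeasure μ] (hX : AEMeasurable X μ)
    (htail : ∀ t, 0 ≤ t → μ {ω | t < X ω} = ENNReal.ofReal (exp (-(t / m)))) :
    ∀ᵐ ω ∂μ, 0 < X ω :=
  (mem_ae_iff_prob_eq_one₀ (hX.nullMeasurable measurableSet_Ioi)).2 <|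
    (htail 0 le_rfl).trans <| by simp

end ExponentialTail

/-- The SINR with which the near user, whose squared channel gain is `h`, detects the far user's
message while treating its own message as interference. -/
noncomputable def relaySINR (a1 a2 ρ h : ℝ) : ℝ := a2 * ρ * h / (a1 * ρ * h + 1)

/-- The gain `τ₂` at which `relaySINR` equals the threshold `γ`; it is meaningful only when
`a1 * γ < a2`, as the SINR saturates at `a2 / a1`. -/
noncomputable def gainThreshold (a1 a2 ρ γ : ℝ) : ℝ := γ / (ρ * (a2 - a1 * γ))

section Outage

variable {a1 a2 ρ γ : ℝ}

lemma relaySINR_lt_iff (ha1 : 0 ≤ a1) (hρ : 0 < ρ) (ha : a1 * γ < a2) {h : ℝ} (hh : 0 ≤ h) :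
    relaySINR a1 a2 ρ h < γ ↔ h < gainThreshold a1 a2 ρ γ := by
  have hslope : 0 < ρ * (a2 - a1 * γ) := mul_pos hρ (sub_pos.2 ha)
  rw [relaySINR, gainThreshold, div_lt_iff₀ (by positivity), lt_div_iff₀ hslope]
  constructor <;> intro _ <;> linarith

lemma lt_relaySINR_iff (ha1 : 0 ≤ a1) (hρ : 0 < ρ) (ha : a1 * γ < a2) {h : ℝ} (hh : 0 ≤ h) :
    γ < relaySINR a1 a2 ρ h ↔ gainThreshold a1 a2 ρ γ < h := by
  have hslope : 0 < ρ * (a2 - a1 * γ) := mul_pos hρ (sub_pos.2 ha)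
  rw [relaySINR, gainThreshold, lt_div_iff₀ (by positivity), div_lt_iff₀ hslope]
  constructor <;> intro _ <;> linarith

variable {Ω : Type*} [MeasurableSpace Ω] {μ : Measure Ω} [IsProbabilityMeasure μ] {H1 H2 : Ω → ℝ}

lemma hd_outage_eq_one_sub_tail_mul_tail (hH1 : AEMeasurable H1 μ) (hH2 : AEMeasurable H2 μ)
    (hIndep : IndepFun H1 H2 μ) (hH1_nonneg : ∀ᵐ ω ∂μ, 0 ≤ H1 ω)
    (ha1 : 0 ≤ a1) (hρ : 0 < ρ) (ha : a1 * γ < a2)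
    (hatom : μ {ω | H1 ω = gainThreshold a1 a2 ρ γ} = 0) :
    μ.real {ω | relaySINR a1 a2 ρ (H1 ω) < γ}
        + μ.real {ω | ρ * H2 ω < γ ∧ γ < relaySINR a1 a2 ρ (H1 ω)}
      = 1 - μ.real {ω | gainThreshold a1 a2 ρ γ < H1 ω} * μ.real {ω | γ / ρ ≤ H2 ω} := by
  have hnear : {ω | relaySINR a1 a2 ρ (H1 ω) < γ} =ᵐ[μ] {ω | H1 ω < gainThreshold a1 a2 ρ γ} := by
    filter_upwards [hH1_nonneg] with ω hω
    exact propext (relaySINR_lt_iff ha1 hρ ha hω)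
  have hfar : {ω | ρ * H2 ω < γ ∧ γ < relaySINR a1 a2 ρ (H1 ω)}
      =ᵐ[μ] {ω | H2 ω < γ / ρ ∧ gainThreshold a1 a2 ρ γ < H1 ω} := by
    filter_upwards [hH1_nonneg] with ω hω
    exact propext (and_congr (lt_div_iff₀' hρ).symm (lt_relaySINR_iff ha1 hρ ha hω))
  rw [measureReal_congr hnear, measureReal_congr hfar,
    measureReal_lt_add_measureReal_lt_and_lt hH1 hH2 hIndep hatom]

end Outage

/-- **HD far-user outage probability without direct link (Corollary 2).**
If `H1` and `H2` are independent exponential random variables with means `Ω1` and `Ω2`,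
then the half-duplex outage probability of the far user without direct link has the
stated closed form. -/
theorem hd_far_user_outage_no_direct
    {Ω : Type*} [MeasurableSpace Ω] (μ : Measure Ω) [IsProbabilityMeasure μ]
    (H1 H2 : Ω → ℝ) (hH1m : Measurable H1) (hH2m : Measurable H2)
    (Ω1 Ω2 : ℝ) (hΩ1 : 0 < Ω1) (hΩ2 : 0 < Ω2)
    (hH1 : ∀ t : ℝ, 0 ≤ t → μ {ω | H1 ω > t} = ENNReal.ofReal (Real.exp (-(t / Ω1))))
    (hH2 : ∀ t : ℝ, 0 ≤ t → μ {ω | H2 ω > t} = ENNReal.ofReal (Real.exp (-(t / Ω2))))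
    (hIndep : IndepFun H1 H2 μ)
    (ρ γ2 a1 a2 : ℝ) (hρ : 0 < ρ) (hγ2 : 0 < γ2)
    (ha1 : 0 < a1) (ha : a1 * γ2 < a2)
    (τ2 : ℝ) (hτ2 : τ2 = γ2 / (ρ * (a2 - a1 * γ2))) :
    (μ {ω | a2 * ρ * H1 ω / (a1 * ρ * H1 ω + 1) < γ2}).toReal
      + (μ {ω | ρ * H2 ω < γ2 ∧ a2 * ρ * H1 ω / (a1 * ρ * H1 ω + 1) > γ2}).toReal
      = 1 - Real.exp (-(τ2 / Ω1) - γ2 / (ρ * Ω2)) := by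
  have hτ2_pos : 0 < τ2 := hτ2 ▸ div_pos hγ2 (mul_pos hρ (sub_pos.2 ha))
  have hthr_pos : 0 < γ2 / ρ := div_pos hγ2 hρ
  have hatom1 := measure_setOf_eq_eq_zero_of_exp_tail hH1m.aemeasurable hH1 hτ2_pos
  have hatom2 := measure_setOf_eq_eq_zero_of_exp_tail hH2m.aemeasurable hH2 hthr_pos
  have htail1 : μ.real {ω | τ2 < H1 ω} = exp (-(τ2 / Ω1)) :=
    measureReal_lt_of_exp_tail hH1 hτ2_pos.le
  have htail2 : μ.real {ω | γ2 / ρ ≤ H2 ω} = exp (-(γ2 / (ρ * Ω2))) := by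
    rw [measureReal_le_eq_measureReal_lt hatom2, measureReal_lt_of_exp_tail hH2 hthr_pos.le,
      div_div]
  have hH1_nonneg : ∀ᵐ ω ∂μ, 0 ≤ H1 ω :=
    (ae_pos_of_exp_tail hH1m.aemeasurable hH1).mono fun _ ↦ le_of_lt
  have hτ2_thr : gainThreshold a1 a2 ρ γ2 = τ2 := hτ2.symm
  have houtage := hd_outage_eq_one_sub_tail_mul_tail hH1m.aemeasurable hH2m.aemeasurable hIndep
    hH1_nonneg ha1.le hρ ha (hτ2_thr ▸ hatom1)
  rw [hτ2_thr, htail1, htail2, ← exp_add, ← sub_eq_add_neg] at houtage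
  exact houtage
end

section
/- Fix thresholds γ1 > 0 and γ2 > 0 with a2 > a1·γ2, and let c = max( γ2/(a2 − a1·γ2), γ1/a1 ). For each ρ > 0 define the full-duplex near-user outage probability P(ρ) = 1 − (Ω1/(Ω1 + c·Ω_LI))·exp(−c/(ρ·Ω1)) (the closed form with θ1(ρ) = c/ρ). Then P(ρ) converges as ρ → ∞ to the positive error floor c·Ω_LI/(Ω1 + c·Ω_LI); consequently the diversity order −lim_{ρ→∞} log P(ρ)/log ρ equals 0. -/
open Filter Real

/-!
Loop self-interference scales with the transmit power, so `ρ · θ1 = c` stays fixed and a larger `ρ`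
only sends the noise factor `exp (-(c / (ρ * Ω1)))` to `1`. The outage probability thus saturates at
a positive level: `log P` stays bounded while `log ρ` diverges.
-/

/-- The outage probability `P`, as a function of the transmit SNR, has diversity order `d`. Encoded
as a limit relation, so that existence of the limit is part of the notion. -/
def HasDiversityOrder (P : ℝ → ℝ) (d : ℝ) : Prop :=
  Tendsto (fun ρ ↦ -(log (P ρ) / log ρ)) atTop (nhds d)

theorem hasDiversityOrder_zero_of_tendsto {P : ℝ → ℝ} {L : ℝ}
    (hP : Tendsto P atTop (nhds L)) (hL : L ≠ 0) : HasDiversityOrder P 0 := by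
  simpa only [HasDiversityOrder, neg_zero] using ((hP.log hL).div_atTop tendsto_log_atTop).neg

theorem tendsto_exp_neg_const_div {α : Type*} {l : Filter α} {f : α → ℝ}
    (hf : Tendsto f l atTop) (k : ℝ) :
    Tendsto (fun x ↦ exp (-(k / f x))) l (nhds 1) := by
  simpa only [neg_zero, exp_zero] using (hf.const_div_atTop k).neg.rexp

/-- Closed form of the full-duplex near-user outage probability at transmit SNR `ρ`, with the
decoding threshold `θ1` entering through the constant `c = ρ · θ1`. -/
noncomputable def fdOutage (Ω1 ΩLI c ρ : ℝ) : ℝ :=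
  1 - Ω1 / (Ω1 + c * ΩLI) * exp (-(c / (ρ * Ω1)))

/-- The error floor: the outage probability left at high SNR by residual self-interference. -/
noncomputable def fdErrorFloor (Ω1 ΩLI c : ℝ) : ℝ :=
  c * ΩLI / (Ω1 + c * ΩLI)

theorem fdErrorFloor_pos {Ω1 ΩLI c : ℝ} (hΩ1 : 0 ≤ Ω1) (hcΩLI : 0 < c * ΩLI) :
    0 < fdErrorFloor Ω1 ΩLI c :=
  div_pos hcΩLI (add_pos_of_nonneg_of_pos hΩ1 hcΩLI)

theorem tendsto_fdOutage_atTop {Ω1 ΩLI c : ℝ} (h : Ω1 + c * ΩLI ≠ 0) :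
    Tendsto (fdOutage Ω1 ΩLI c) atTop (nhds (fdErrorFloor Ω1 ΩLI c)) := by
  have noise_factor : Tendsto (fun ρ ↦ exp (-(c / (ρ * Ω1)))) atTop (nhds 1) := by
    simpa only [div_mul_eq_div_div_swap, id] using tendsto_exp_neg_const_div tendsto_id (c / Ω1)
  have floor_eq : 1 - Ω1 / (Ω1 + c * ΩLI) * 1 = fdErrorFloor Ω1 ΩLI c := by
    rw [mul_one, one_sub_div h, add_sub_cancel_left, fdErrorFloor]
  exact floor_eq ▸ (noise_factor.const_mul _).const_sub 1

/-- **FD near-user error floor and zero diversity order.**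
The full-duplex near-user outage probability converges to the positive error floor
`c·Ω_LI/(Ω1 + c·Ω_LI)` as `ρ → ∞`, and the diversity order
`−lim_{ρ→∞} log P(ρ)/log ρ` equals `0`. -/
theorem fd_near_user_zero_diversity
    (Ω1 ΩLI : ℝ) (hΩ1 : 0 < Ω1) (hΩLI : 0 < ΩLI)
    (γ1 γ2 a1 a2 : ℝ) (hγ1 : 0 < γ1) (hγ2 : 0 < γ2)
    (ha1 : 0 < a1) (ha : a1 * γ2 < a2)
    (c : ℝ) (hc : c = max (γ2 / (a2 - a1 * γ2)) (γ1 / a1))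
    (P : ℝ → ℝ)
    (hP : ∀ ρ : ℝ, 0 < ρ →
      P ρ = 1 - Ω1 / (Ω1 + c * ΩLI) * Real.exp (-(c / (ρ * Ω1)))) :
    0 < c * ΩLI / (Ω1 + c * ΩLI) ∧
      Tendsto P atTop (nhds (c * ΩLI / (Ω1 + c * ΩLI))) ∧
      Tendsto (fun ρ : ℝ => -(Real.log (P ρ) / Real.log ρ)) atTop (nhds 0) := by
  have c_pos : 0 < c := hc ▸ lt_max_of_lt_left (div_pos hγ2 (sub_pos.2 ha))
  have floor_pos : 0 < fdErrorFloor Ω1 ΩLI c := fdErrorFloor_pos hΩ1.le (mul_pos c_pos hΩLI)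
  have P_eq : fdOutage Ω1 ΩLI c =ᶠ[atTop] P := by
    filter_upwards [eventually_gt_atTop 0] with ρ hρ using (hP ρ hρ).symm
  have tendsto_floor : Tendsto P atTop (nhds (fdErrorFloor Ω1 ΩLI c)) :=
    (tendsto_fdOutage_atTop (by positivity)).congr' P_eq
  exact ⟨floor_pos, tendsto_floor, hasDiversityOrder_zero_of_tendsto tendsto_floor floor_pos.ne'⟩
end

section
/- Let H1 be an exponentially distributed random variable with mean Ω1 > 0, let ρ > 0 and 0 < a1 < 1. Then the half-duplex ergodic rate of the near user satisfies (1/2)·E[ log₂(1 + a1·ρ·H1) ] = −( exp(1/(a1·ρ·Ω1)) / (2 ln 2) ) · Ei(−1/(a1·ρ·Ω1)). -/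
open MeasureTheory ProbabilityTheory Real

/-- The exponential integral: for `x > 0`, `Ei (-x) = -∫_x^∞ e^{-t}/t dt`. -/
noncomputable def Ei (x : ℝ) : ℝ := -∫ t in Set.Ioi (-x), Real.exp (-t) / t

/-!
Writing `G t = log (1 + c t)`, the layer cake formula turns `E[G(X)]` into `∫₀^∞ P(X > t) G'(t) dt`.
For an exponential tail `P(X > t) = exp (-t / m)` the change of variables `s = t / m` brings this to
`∫₀^∞ exp (-s) / (s + x) ds` with `x = 1 / (c m)`, which a translation by `x` identifies with
`-exp x * Ei (-x)`.
-/

section LayerCake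

theorem aestronglyMeasurable_comp_of_continuousOn {Ω α β : Type*} [MeasurableSpace Ω]
    {μ : Measure Ω} [TopologicalSpace α] [MeasurableSpace α] [OpensMeasurableSpace α]
    [TopologicalSpace β] [TopologicalSpace.PseudoMetrizableSpace β]
    [SecondCountableTopologyEither α β] {X : Ω → α} {G : α → β} {s : Set α}
    (hG : ContinuousOn G s) (hs : MeasurableSet s) (hX : AEMeasurable X μ)
    (hXs : ∀ᵐ ω ∂μ, X ω ∈ s) : AEStronglyMeasurable (fun ω ↦ G (X ω)) μ := by
  have h_law : (μ.map X).restrict s = μ.map X :=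
    Measure.restrict_eq_self_of_ae_mem ((ae_map_iff hX hs).2 hXs)
  exact (h_law ▸ hG.aestronglyMeasurable hs).comp_aemeasurable hX

theorem aestronglyMeasurable_of_hasDerivAt {F : Type*} [NormedAddCommGroup F] [NormedSpace ℝ F]
    [CompleteSpace F] {ν : Measure ℝ} {G g : ℝ → F} {s : Set ℝ} (hs : MeasurableSet s)
    (hGg : ∀ t ∈ s, HasDerivAt G (g t) t) : AEStronglyMeasurable g (ν.restrict s) :=
  (aestronglyMeasurable_deriv G _).congr <| (ae_restrict_mem hs).mono fun t ht ↦ (hGg t ht).deriv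

theorem antitone_measureReal_lt {Ω α : Type*} [MeasurableSpace Ω] {μ : Measure Ω}
    [IsFiniteMeasure μ] [Preorder α] (X : Ω → α) : Antitone fun t ↦ μ.real {ω | t < X ω} :=
  fun _ _ hst ↦ measureReal_mono fun _ hω ↦ lt_of_le_of_lt hst hω

variable {Ω : Type*} [MeasurableSpace Ω] {μ : Measure Ω} [IsFiniteMeasure μ] {X : Ω → ℝ}

/- No integrability is assumed: the two integrals are infinite together, and then both Bochner
integrals are `0`. -/
theorem integral_comp_eq_integral_measureReal_lt_mul_deriv {G g : ℝ → ℝ}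
    (hX : AEMeasurable X μ) (hX0 : 0 ≤ᵐ[μ] X) (hG : ContinuousOn G (Set.Ici 0)) (hG0 : G 0 = 0)
    (hGg : ∀ t ∈ Set.Ioi 0, HasDerivAt G (g t) t) (hg : ∀ t ∈ Set.Ioi 0, 0 ≤ g t) :
    ∫ ω, G (X ω) ∂μ = ∫ t in Set.Ioi 0, μ.real {ω | t < X ω} * g t := by
  have hg_int (x : ℝ) (hx : 0 ≤ x) : IntervalIntegrable g volume 0 x :=
    (intervalIntegrable_iff_integrableOn_Ioc_of_le hx).2 <|
      intervalIntegral.integrableOn_deriv_of_nonneg (hG.mono Set.Icc_subset_Ici_self)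
        (fun t ht ↦ hGg t ht.1) fun t ht ↦ hg t ht.1
  have hG_eq (x : ℝ) (hx : 0 ≤ x) : G x = ∫ t in 0..x, g t := by
    rw [intervalIntegral.integral_eq_sub_of_hasDerivAt_of_le hx (hG.mono Set.Icc_subset_Ici_self)
      (fun t ht ↦ hGg t ht.1) (hg_int x hx), hG0, sub_zero]
  have hG_nonneg : 0 ≤ᵐ[μ] fun ω ↦ G (X ω) := by
    filter_upwards [hX0] with ω (hω : 0 ≤ X ω)
    rw [hG_eq _ hω, intervalIntegral.integral_of_le hω]
    exact setIntegral_nonneg measurableSet_Ioc fun t ht ↦ hg t ht.1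
  have hg_ae : ∀ᵐ t ∂volume.restrict (Set.Ioi 0), 0 ≤ g t :=
    (ae_restrict_mem measurableSet_Ioi).mono hg
  rw [integral_eq_lintegral_of_nonneg_ae hG_nonneg
      (aestronglyMeasurable_comp_of_continuousOn hG measurableSet_Ici hX hX0),
    integral_eq_lintegral_of_nonneg_ae
      (hg_ae.mono fun t ht ↦ mul_nonneg measureReal_nonneg ht)
      ((antitone_measureReal_lt X).measurable.aestronglyMeasurable.mul
        (aestronglyMeasurable_of_hasDerivAt measurableSet_Ioi hGg))]
  congr 1
  calc ∫⁻ ω, ENNReal.ofReal (G (X ω)) ∂μ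
      = ∫⁻ ω, ENNReal.ofReal (∫ t in 0..X ω, g t) ∂μ :=
        lintegral_congr_ae <| hX0.mono fun ω hω ↦ congrArg ENNReal.ofReal (hG_eq _ hω)
    _ = ∫⁻ t in Set.Ioi 0, μ {ω | t < X ω} * ENNReal.ofReal (g t) :=
        lintegral_comp_eq_lintegral_meas_lt_mul μ hX0 hX (fun t ht ↦ hg_int t ht.le) hg_ae
    _ = ∫⁻ t in Set.Ioi 0, ENNReal.ofReal (μ.real {ω | t < X ω} * g t) := by
        simp only [ENNReal.ofReal_mul measureReal_nonneg,
          ofReal_measureReal (measure_ne_top μ _)]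

theorem integral_log_one_add_mul_eq_integral_measureReal_lt {c : ℝ}
    (hc : 0 ≤ c) (hX : AEMeasurable X μ) (hX0 : 0 ≤ᵐ[μ] X) :
    ∫ ω, log (1 + c * X ω) ∂μ = ∫ t in Set.Ioi 0, μ.real {ω | t < X ω} * (c / (1 + c * t)) := by
  have h_pos (t : ℝ) (ht : 0 ≤ t) : 0 < 1 + c * t := by positivity
  refine integral_comp_eq_integral_measureReal_lt_mul_deriv (G := fun t ↦ log (1 + c * t))
    hX hX0 ?_ (by simp) (fun t ht ↦ ?_) fun t ht ↦ div_nonneg hc (h_pos t (le_of_lt ht)).le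
  · exact ContinuousOn.log (by fun_prop) fun t ht ↦ (h_pos t ht).ne'
  · have h_affine : HasDerivAt (fun t ↦ 1 + c * t) c t := by
      simpa only [mul_one, id] using ((hasDerivAt_id t).const_mul c).const_add 1
    exact h_affine.log (h_pos t (le_of_lt ht)).ne'

end LayerCake

/- For `x ≤ 0` the integrand is not integrable at the pole `s = -x`, and both sides are `0`. -/
theorem integral_exp_neg_div_add_eq_neg_exp_mul_Ei (x : ℝ) :
    ∫ s in Set.Ioi 0, exp (-s) / (s + x) = -exp x * Ei (-x) := by
  have h_shift := (measurePreserving_add_right volume x).setIntegral_preimage_emb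
    (measurableEmbedding_addRight x) (fun t ↦ exp (-t) / t) (Set.Ioi x)
  rw [Set.preimage_add_const_Ioi, sub_self] at h_shift
  calc ∫ s in Set.Ioi 0, exp (-s) / (s + x)
      = ∫ s in Set.Ioi 0, exp x * (exp (-(s + x)) / (s + x)) := by
        congr! 2 with s
        rw [← mul_div_assoc, ← exp_add]
        ring_nf
    _ = -exp x * Ei (-x) := by
        rw [integral_const_mul, h_shift, Ei, neg_neg, neg_mul_neg]

theorem integral_exp_neg_div_mul_div_one_add_mul {m c : ℝ} (hm : 0 < m) (hc : c ≠ 0) :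
    ∫ t in Set.Ioi 0, exp (-(t / m)) * (c / (1 + c * t)) =
      -exp (1 / (c * m)) * Ei (-(1 / (c * m))) := by
  have h_scale := integral_comp_mul_left_Ioi
    (fun s ↦ exp (-s) / (s + 1 / (c * m))) 0 (inv_pos.2 hm)
  rw [mul_zero, inv_inv, smul_eq_mul] at h_scale
  calc ∫ t in Set.Ioi 0, exp (-(t / m)) * (c / (1 + c * t))
      = ∫ t in Set.Ioi 0, m⁻¹ * (exp (-(m⁻¹ * t)) / (m⁻¹ * t + 1 / (c * m))) := by
        congr! 2 with t
        rw [inv_mul_eq_div]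
        field_simp
        ring
    _ = ∫ s in Set.Ioi 0, exp (-s) / (s + 1 / (c * m)) := by
        rw [integral_const_mul, h_scale, inv_mul_cancel_left₀ hm.ne']
    _ = -exp (1 / (c * m)) * Ei (-(1 / (c * m))) :=
        integral_exp_neg_div_add_eq_neg_exp_mul_Ei _

theorem integral_log_one_add_mul_of_exponential_tail {Ω : Type*} [MeasurableSpace Ω]
    {μ : Measure Ω} [IsProbabilityMeasure μ] {X : Ω → ℝ} (hX : AEMeasurable X μ) {m c : ℝ}
    (hm : 0 < m) (hc : 0 < c)
    (h_tail : ∀ t, 0 ≤ t → μ {ω | t < X ω} = ENNReal.ofReal (exp (-(t / m)))) :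
    ∫ ω, log (1 + c * X ω) ∂μ = -exp (1 / (c * m)) * Ei (-(1 / (c * m))) := by
  have hX_pos : ∀ᵐ ω ∂μ, 0 < X ω :=
    (mem_ae_iff_prob_eq_one₀ (nullMeasurableSet_lt aemeasurable_const hX)).2 <| by
      simpa using h_tail 0 le_rfl
  rw [integral_log_one_add_mul_eq_integral_measureReal_lt hc.le hX (hX_pos.mono fun _ ↦ le_of_lt),
    ← integral_exp_neg_div_mul_div_one_add_mul hm hc.ne']
  refine setIntegral_congr_fun measurableSet_Ioi fun t ht ↦ ?_
  simp only [measureReal_def, h_tail t (le_of_lt ht), ENNReal.toReal_ofReal (exp_nonneg _)]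

/-- **HD near-user ergodic rate (Corollary 3).**
If `H1` is exponential with mean `Ω1`, the half-duplex ergodic rate of the near user
(with the factor `1/2` for the two time slots) has the stated closed form. -/
theorem hd_near_user_ergodic_rate
    {Ω : Type*} [MeasurableSpace Ω] (μ : Measure Ω) [IsProbabilityMeasure μ]
    (H1 : Ω → ℝ) (hH1m : Measurable H1)
    (Ω1 : ℝ) (hΩ1 : 0 < Ω1)
    (hH1 : ∀ t : ℝ, 0 ≤ t → μ {ω | H1 ω > t} = ENNReal.ofReal (Real.exp (-(t / Ω1))))
    (ρ a1 : ℝ) (hρ : 0 < ρ) (ha1 : 0 < a1) (ha1' : a1 < 1) :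
    (1 / 2) * ∫ ω, Real.logb 2 (1 + a1 * ρ * H1 ω) ∂μ
      = -(Real.exp (1 / (a1 * ρ * Ω1)) / (2 * Real.log 2)) *
          Ei (-(1 / (a1 * ρ * Ω1))) := by
  simp only [logb, integral_div,
    integral_log_one_add_mul_of_exponential_tail hH1m.aemeasurable hΩ1 (mul_pos ha1 hρ) hH1]
  ring
end

section
/- Let Ω1, Ω2, Ω_LI, ρ > 0, let a1, a2 satisfy 0 < a1 < a2 and a1 + a2 = 1, assume ξ := Ω_LI − a1·Ω1 > 0 and a2·Ω1 ≠ ξ. Then (1/ln 2)·∫₀^{a2/a1} (1/(1+y)) · exp(−y/(ρ·Ω2)) · (a2 − a1·y)·Ω1 / ( (a2 − a1·y)·Ω1 + y·Ω_LI ) dy = (1/ln 2)·{ exp(1/(ρ·Ω2))·[ Ei(−1/(ρ·a1·Ω2)) − Ei(−1/(ρ·Ω2)) ]·( Ω1/(a2·Ω1 − ξ) ) − ( exp(a2·Ω1/(ρ·Ω2·ξ))/ξ )·[ Ei( −(a2·ξ + a1·a2·Ω1)/(ρ·a1·ξ·Ω2) ) − Ei( −a2·Ω1/(ρ·Ω2·ξ)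 ) ]·( (a1·a2·Ω1² + a2·Ω1·ξ)/(a2·Ω1 − ξ) ) }. -/
open MeasureTheory Real

/-!
Since `ΩLI = ξ + a1 * Ω1`, the denominator of the last factor is `ξ * (y + a2 * Ω1 / ξ)`, so the
rational part of the integrand has simple poles at `-1` and `-(a2 * Ω1 / ξ)`, both left of the
interval of integration and distinct because `a2 * Ω1 ≠ ξ`. Partial fractions leave integrals of
`exp (-(y / c)) / (y + b)` with `c = ρ * Ω2`, and the substitution `t = (y + b) / c` turns each
into `exp (b / c)` times an increment of `Ei`.
-/

open Set intervalIntegral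

lemma integrableOn_exp_neg_div_Ioi {p : ℝ} (hp : 0 < p) :
    IntegrableOn (fun t : ℝ => exp (-t) / t) (Ioi p) := by
  have h_dom : IntegrableOn (fun t : ℝ => exp (-t) / p) (Ioi p) :=
    (integrableOn_exp_neg_Ioi p).div_const p
  refine Integrable.mono' h_dom (Measurable.aestronglyMeasurable (by fun_prop)) ?_
  refine ae_restrict_of_forall_mem measurableSet_Ioi fun t (ht : p < t) => ?_
  have ht0 : 0 < t := hp.trans ht
  rw [norm_of_nonneg (by positivity)]
  gcongr

lemma Ei_neg_sub_Ei_neg {p q : ℝ} (hp : 0 < p) (hq : 0 < q) :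
    Ei (-q) - Ei (-p) = ∫ t in p..q, exp (-t) / t := by
  rw [← integral_Ioi_sub_Ioi' (integrableOn_exp_neg_div_Ioi hp) (integrableOn_exp_neg_div_Ioi hq)]
  simp only [Ei, neg_neg]
  ring

lemma integral_exp_neg_div_div_add {b c u v : ℝ} (hu : 0 < (u + b) / c) (hv : 0 < (v + b) / c) :
    ∫ y in u..v, exp (-(y / c)) / (y + b) =
      exp (b / c) * (Ei (-((v + b) / c)) - Ei (-((u + b) / c))) := by
  have hc : c ≠ 0 := fun h => by simp [h] at hu
  have h_integrand (y : ℝ) : exp (-(y / c)) / (y + b) =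
      exp (b / c) * (c⁻¹ * (exp (-(y / c + b / c)) / (y / c + b / c))) := by
    have h_exp : exp (-(y / c)) = exp (b / c) * exp (-(y / c + b / c)) := by
      rw [← exp_add]
      ring_nf
    rw [h_exp, ← add_div]
    field_simp
  simp only [h_integrand, intervalIntegral.integral_const_mul]
  rw [← smul_eq_mul c⁻¹, inv_smul_integral_comp_div_add (fun t => exp (-t) / t), ← add_div,
    ← add_div, Ei_neg_sub_Ei_neg hu hv]

lemma intervalIntegrable_exp_neg_div_div_add {b u v : ℝ} (c : ℝ) (hb : -b ∉ uIcc u v) :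
    IntervalIntegrable (fun y => exp (-(y / c)) / (y + b)) volume u v := by
  refine (ContinuousOn.div (by fun_prop) (by fun_prop) fun y hy h => hb ?_).intervalIntegrable
  rwa [← eq_neg_of_add_eq_zero_left h]

lemma neg_notMem_uIcc_of_add_div_pos {b c u v : ℝ} (hu : 0 < (u + b) / c)
    (hv : 0 < (v + b) / c) : -b ∉ uIcc u v := by
  rw [div_pos_iff] at hu hv
  grind [mem_uIcc]

lemma linear_div_mul_eq_sub_div {K : Type*} [Field K] {p q b d y : K} (hbd : b ≠ d)
    (hb : y + b ≠ 0) (hd : y + d ≠ 0) :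
    (p - q * y) / ((y + b) * (y + d)) =
      ((p + q * b) / (y + b) - (p + q * d) / (y + d)) / (d - b) := by
  have hdb : d - b ≠ 0 := sub_ne_zero.2 hbd.symm
  field_simp
  ring

lemma integral_exp_neg_div_mul_linear_div {b c d u v : ℝ} (p q : ℝ) (hbd : b ≠ d)
    (hbu : 0 < (u + b) / c) (hbv : 0 < (v + b) / c)
    (hdu : 0 < (u + d) / c) (hdv : 0 < (v + d) / c) :
    ∫ y in u..v, exp (-(y / c)) * ((p - q * y) / ((y + b) * (y + d))) =
      ((p + q * b) * (exp (b / c) * (Ei (-((v + b) / c)) - Ei (-((u + b) / c)))) -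
        (p + q * d) * (exp (d / c) * (Ei (-((v + d) / c)) - Ei (-((u + d) / c))))) /
          (d - b) := by
  have hb := neg_notMem_uIcc_of_add_div_pos hbu hbv
  have hd := neg_notMem_uIcc_of_add_div_pos hdu hdv
  have h_split : ∀ y ∈ uIcc u v, exp (-(y / c)) * ((p - q * y) / ((y + b) * (y + d))) =
      ((p + q * b) * (exp (-(y / c)) / (y + b)) -
        (p + q * d) * (exp (-(y / c)) / (y + d))) / (d - b) := fun y hy => by
    rw [linear_div_mul_eq_sub_div hbd (fun h => hb (eq_neg_of_add_eq_zero_left h ▸ hy))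
      (fun h => hd (eq_neg_of_add_eq_zero_left h ▸ hy))]
    ring
  rw [integral_congr h_split, intervalIntegral.integral_div,
    integral_sub ((intervalIntegrable_exp_neg_div_div_add c hb).const_mul _)
      ((intervalIntegrable_exp_neg_div_div_add c hd).const_mul _),
    intervalIntegral.integral_const_mul, intervalIntegral.integral_const_mul,
    integral_exp_neg_div_div_add hbu hbv, integral_exp_neg_div_div_add hdu hdv]

lemma rate_integrand_eq_linear_div {Ω1 ΩLI a1 a2 ξ : ℝ} (c y : ℝ)
    (hξdef : ξ = ΩLI - a1 * Ω1) (hξ : ξ ≠ 0) :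
    1 / (1 + y) * exp (-(y / c)) * ((a2 - a1 * y) * Ω1 / ((a2 - a1 * y) * Ω1 + y * ΩLI)) =
      exp (-(y / c)) * ((a2 * Ω1 / ξ - a1 * Ω1 / ξ * y) / ((y + 1) * (y + a2 * Ω1 / ξ))) := by
  have h_denom : (a2 - a1 * y) * Ω1 + y * ΩLI = ξ * (y + a2 * Ω1 / ξ) := by
    rw [mul_add, mul_div_cancel₀ _ hξ, hξdef]
    ring
  rw [h_denom, add_comm 1 y]
  field_simp

theorem fd_far_user_ergodic_rate_high_snr_general
    (Ω1 Ω2 ΩLI ρ : ℝ) (hΩ1 : 0 < Ω1) (hΩ2 : 0 < Ω2) (hρ : 0 < ρ)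
    (a1 a2 : ℝ) (ha1 : 0 < a1) (ha2 : 0 < a2) (hsum : a1 + a2 = 1)
    (ξ : ℝ) (hξdef : ξ = ΩLI - a1 * Ω1) (hξ : 0 < ξ) (hne : a2 * Ω1 ≠ ξ) :
    (1 / Real.log 2) * ∫ y in (0 : ℝ)..(a2 / a1),
        (1 / (1 + y)) * Real.exp (-(y / (ρ * Ω2))) *
          ((a2 - a1 * y) * Ω1 / ((a2 - a1 * y) * Ω1 + y * ΩLI))
      = (1 / Real.log 2) *
          (Real.exp (1 / (ρ * Ω2)) *
              (Ei (-(1 / (ρ * a1 * Ω2))) - Ei (-(1 / (ρ * Ω2)))) *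
              (Ω1 / (a2 * Ω1 - ξ))
            - (Real.exp (a2 * Ω1 / (ρ * Ω2 * ξ)) / ξ) *
              (Ei (-((a2 * ξ + a1 * a2 * Ω1) / (ρ * a1 * ξ * Ω2)))
                - Ei (-(a2 * Ω1 / (ρ * Ω2 * ξ)))) *
              ((a1 * a2 * Ω1 ^ 2 + a2 * Ω1 * ξ) / (a2 * Ω1 - ξ))) := by
  have hpoles : 1 ≠ a2 * Ω1 / ξ := fun h => hne ((eq_div_iff hξ.ne').1 h ▸ one_mul ξ)
  have h_end₁ : (a2 / a1 + 1) / (ρ * Ω2) = 1 / (ρ * a1 * Ω2) := by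
    field_simp
    linarith
  have h_end₂ : (a2 / a1 + a2 * Ω1 / ξ) / (ρ * Ω2) =
      (a2 * ξ + a1 * a2 * Ω1) / (ρ * a1 * ξ * Ω2) := by
    field_simp
  have h_start₂ : a2 * Ω1 / ξ / (ρ * Ω2) = a2 * Ω1 / (ρ * Ω2 * ξ) := by
    field_simp
  simp only [rate_integrand_eq_linear_div _ _ hξdef hξ.ne']
  rw [integral_exp_neg_div_mul_linear_div _ _ hpoles (by positivity) (by positivity)
    (by positivity) (by positivity), h_end₁, h_end₂, zero_add, zero_add, h_start₂]
  have hd : a2 * Ω1 - ξ ≠ 0 := sub_ne_zero.2 hne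
  have hd' : a2 * Ω1 / ξ - 1 ≠ 0 := sub_ne_zero.2 hpoles.symm
  obtain rfl : a2 = 1 - a1 := by linarith
  field_simp
  ring

/-- **High-SNR approximation of the FD far-user ergodic rate without direct link
(Theorem 4).** -/
theorem fd_far_user_ergodic_rate_high_snr
    (Ω1 Ω2 ΩLI ρ : ℝ) (hΩ1 : 0 < Ω1) (hΩ2 : 0 < Ω2) (hΩLI : 0 < ΩLI) (hρ : 0 < ρ)
    (a1 a2 : ℝ) (ha1 : 0 < a1) (ha12 : a1 < a2) (hsum : a1 + a2 = 1)
    (ξ : ℝ) (hξdef : ξ = ΩLI - a1 * Ω1) (hξ : 0 < ξ) (hne : a2 * Ω1 ≠ ξ) :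
    (1 / Real.log 2) * ∫ y in (0 : ℝ)..(a2 / a1),
        (1 / (1 + y)) * Real.exp (-(y / (ρ * Ω2))) *
          ((a2 - a1 * y) * Ω1 / ((a2 - a1 * y) * Ω1 + y * ΩLI))
      = (1 / Real.log 2) *
          (Real.exp (1 / (ρ * Ω2)) *
              (Ei (-(1 / (ρ * a1 * Ω2))) - Ei (-(1 / (ρ * Ω2)))) *
              (Ω1 / (a2 * Ω1 - ξ))
            - (Real.exp (a2 * Ω1 / (ρ * Ω2 * ξ)) / ξ) *
              (Ei (-((a2 * ξ + a1 * a2 * Ω1) / (ρ * a1 * ξ * Ω2)))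
                - Ei (-(a2 * Ω1 / (ρ * Ω2 * ξ)))) *
              ((a1 * a2 * Ω1 ^ 2 + a2 * Ω1 * ξ) / (a2 * Ω1 - ξ))) := by
  exact fd_far_user_ergodic_rate_high_snr_general Ω1 Ω2 ΩLI ρ hΩ1 hΩ2 hρ a1 a2 ha1
    (ha1.trans ha12) hsum ξ hξdef hξ hne
end

section
/- Let Ω1, Ω_LI > 0, let a1, a2 satisfy 0 < a1 < a2 and a1 + a2 = 1, set ξ = Ω_LI − a1·Ω1, and assume ξ ≠ 0 and a2·Ω1 ≠ ξ. Then ∫₀^{a2/a1} (1/(1+y)) · (a2 − a1·y)·Ω1 / ( (a2 − a1·y)·Ω1 + y·Ω_LI ) dy = ln(1 + a2/a1)·( Ω1/(a2·Ω1 − ξ) ) − (1/ξ)·ln(1 + ξ/(a1·Ω1))·( (a2·Ω1·ξ + a1·a2·Ω1²)/(a2·Ω1 − ξ) ). In particular, the high-SNR asymptotic ergodic rate of the far user with direct link in full-duplex NOMA equals 1/ln 2 times this quantity, which is independent of ρ, so the far user's high-SNR slope is zero. -/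
open MeasureTheory Filter Real

/-!
Since `ΩLI = ξ + a1 * Ω1`, the second denominator is the affine function `a2 * Ω1 + ξ * y`, which
is positive at both ends of `[0, a2 / a1]`, hence on the whole interval. The integrand is therefore
an affine function over a product of two nonvanishing affine functions, and partial fractions
reduce its integral to two logarithms. The slope vanishes because the rate does not depend on `ρ`.
-/

section AffineIntegrals

open scoped Interval

variable {K : Type*} [Field K]

theorem affine_div_mul_affine_eq {p q p' q' y : K} (r s : K)
    (hD : p' * q - p * q' ≠ 0) (h : p + q * y ≠ 0) (h' : p' + q' * y ≠ 0) :
    (r + s * y) / ((p + q * y) * (p' + q' * y)) =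
      (r * q - s * p) / (p' * q - p * q') * (p + q * y)⁻¹ -
        (r * q' - s * p') / (p' * q - p * q') * (p' + q' * y)⁻¹ := by
  have numerator : (r + s * y) * (p' * q - p * q') =
      (r * q - s * p) * (p' + q' * y) - (r * q' - s * p') * (p + q * y) := by ring
  calc
    _ = ((r * q - s * p) * (p' + q' * y) - (r * q' - s * p') * (p + q * y)) /
        (p' * q - p * q') / ((p + q * y) * (p' + q' * y)) := by
      rw [← numerator, mul_div_cancel_right₀ _ hD]
    _ = _ := by field_simp

variable [LinearOrder K] [IsStrictOrderedRing K]

theorem affine_mem_uIcc (p q : K) {a b y : K} (hy : y ∈ [[a, b]]) :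
    p + q * y ∈ [[p + q * a, p + q * b]] := by
  rw [← Set.image_const_add_uIcc, ← Set.image_const_mul_uIcc]
  exact Set.mem_image_of_mem _ (Set.mem_image_of_mem _ hy)

theorem affine_ne_zero_of_mem_uIcc {p q a b y : K} (h : 0 ∉ [[p + q * a, p + q * b]])
    (hy : y ∈ [[a, b]]) : p + q * y ≠ 0 :=
  fun h0 ↦ h (h0 ▸ affine_mem_uIcc p q hy)

variable {a b p q p' q' : ℝ}

theorem intervalIntegrable_inv_affine (h : 0 ∉ [[p + q * a, p + q * b]]) :
    IntervalIntegrable (fun y ↦ (p + q * y)⁻¹) volume a b :=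
  intervalIntegral.intervalIntegrable_inv (fun _ hy ↦ affine_ne_zero_of_mem_uIcc h hy)
    (by fun_prop)

theorem integral_inv_affine (hq : q ≠ 0) (h : 0 ∉ [[p + q * a, p + q * b]]) :
    ∫ y in a..b, (p + q * y)⁻¹ = q⁻¹ * log ((p + q * b) / (p + q * a)) := by
  rw [intervalIntegral.integral_comp_add_mul (fun x ↦ x⁻¹) hq, integral_inv h, smul_eq_mul]

theorem integral_affine_div_mul_affine (r s : ℝ) (hq : q ≠ 0) (hq' : q' ≠ 0)
    (hD : p' * q - p * q' ≠ 0) (h : 0 ∉ [[p + q * a, p + q * b]])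
    (h' : 0 ∉ [[p' + q' * a, p' + q' * b]]) :
    ∫ y in a..b, (r + s * y) / ((p + q * y) * (p' + q' * y)) =
      (r * q - s * p) / (p' * q - p * q') * (q⁻¹ * log ((p + q * b) / (p + q * a))) -
        (r * q' - s * p') / (p' * q - p * q') *
          (q'⁻¹ * log ((p' + q' * b) / (p' + q' * a))) := by
  rw [intervalIntegral.integral_congr fun y hy ↦ affine_div_mul_affine_eq r s hD
      (affine_ne_zero_of_mem_uIcc h hy) (affine_ne_zero_of_mem_uIcc h' hy),
    intervalIntegral.integral_sub ((intervalIntegrable_inv_affine h).const_mul _)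
      ((intervalIntegrable_inv_affine h').const_mul _),
    intervalIntegral.integral_const_mul, intervalIntegral.integral_const_mul,
    integral_inv_affine hq h, integral_inv_affine hq' h']

end AffineIntegrals

theorem fd_far_user_ergodic_rate_direct_high_snr_general
    (Ω1 ΩLI : ℝ) (hΩ1 : 0 < Ω1) (hΩLI : 0 < ΩLI)
    (a1 a2 : ℝ) (ha1 : 0 < a1) (ha2 : 0 < a2)
    (ξ : ℝ) (hξdef : ξ = ΩLI - a1 * Ω1) (hξ : ξ ≠ 0) (hne : a2 * Ω1 ≠ ξ) :
    (∫ y in (0 : ℝ)..(a2 / a1),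
        (1 / (1 + y)) * ((a2 - a1 * y) * Ω1 / ((a2 - a1 * y) * Ω1 + y * ΩLI)))
      = log (1 + a2 / a1) * ((a1 + a2) * Ω1 / (a2 * Ω1 - ξ))
        - (1 / ξ) * log (1 + ξ / (a1 * Ω1)) *
            ((a2 * Ω1 * ξ + a1 * a2 * Ω1 ^ 2) / (a2 * Ω1 - ξ)) ∧
      Tendsto
        (fun ρ : ℝ =>
          ((1 / log 2) *
              ∫ y in (0 : ℝ)..(a2 / a1),
                (1 / (1 + y)) *
                  ((a2 - a1 * y) * Ω1 / ((a2 - a1 * y) * Ω1 + y * ΩLI))) /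
            logb 2 ρ)
        atTop (nhds 0) := by
  refine ⟨?_, (tendsto_logb_atTop one_lt_two).const_div_atTop _⟩
  have integrand_eq (y : ℝ) :
      (1 / (1 + y)) * ((a2 - a1 * y) * Ω1 / ((a2 - a1 * y) * Ω1 + y * ΩLI)) =
        (a2 * Ω1 + -(a1 * Ω1) * y) / ((1 + 1 * y) * (a2 * Ω1 + ξ * y)) := by
    rw [div_mul_div_comm, hξdef]
    congr 1 <;> ring
  have right_end : a2 * Ω1 + ξ * (a2 / a1) = a2 * ΩLI / a1 := by
    rw [hξdef]
    field_simp
    ring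
  have zero_notMem_uIcc_one_add : 0 ∉ Set.uIcc (1 + 1 * 0) (1 + 1 * (a2 / a1)) :=
    Set.notMem_uIcc_of_lt (by norm_num) (by positivity)
  have zero_notMem_uIcc_denominator :
      0 ∉ Set.uIcc (a2 * Ω1 + ξ * 0) (a2 * Ω1 + ξ * (a2 / a1)) :=
    Set.notMem_uIcc_of_lt (by simp only [mul_zero, add_zero]; positivity)
      (right_end ▸ by positivity)
  have log_arg : (a2 * Ω1 + ξ * (a2 / a1)) / (a2 * Ω1) = 1 + ξ / (a1 * Ω1) := by
    field_simp
  simp only [integrand_eq]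
  rw [integral_affine_div_mul_affine _ _ one_ne_zero hξ
    (by simpa only [mul_one, one_mul] using sub_ne_zero.mpr hne)
    zero_notMem_uIcc_one_add zero_notMem_uIcc_denominator]
  simp only [mul_zero, add_zero, one_mul, mul_one, div_one, log_arg]
  ring

/-- **High-SNR asymptotic ergodic rate of the FD far user with direct link
(Theorem 6).** The defining integral has the stated closed form; in particular the
asymptotic ergodic rate `(1/ln 2)` times this quantity is independent of `ρ`, so the
far user's high-SNR slope is zero. -/
theorem fd_far_user_ergodic_rate_direct_high_snr
    (Ω1 ΩLI : ℝ) (hΩ1 : 0 < Ω1) (hΩLI : 0 < ΩLI)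
    (a1 a2 : ℝ) (ha1 : 0 < a1) (ha12 : a1 < a2) (hsum : a1 + a2 = 1)
    (ξ : ℝ) (hξdef : ξ = ΩLI - a1 * Ω1) (hξ : ξ ≠ 0) (hne : a2 * Ω1 ≠ ξ) :
    (∫ y in (0 : ℝ)..(a2 / a1),
        (1 / (1 + y)) * ((a2 - a1 * y) * Ω1 / ((a2 - a1 * y) * Ω1 + y * ΩLI)))
      = Real.log (1 + a2 / a1) * (Ω1 / (a2 * Ω1 - ξ))
        - (1 / ξ) * Real.log (1 + ξ / (a1 * Ω1)) *
            ((a2 * Ω1 * ξ + a1 * a2 * Ω1 ^ 2) / (a2 * Ω1 - ξ)) ∧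
      Tendsto
        (fun ρ : ℝ =>
          ((1 / Real.log 2) *
              ∫ y in (0 : ℝ)..(a2 / a1),
                (1 / (1 + y)) *
                  ((a2 - a1 * y) * Ω1 / ((a2 - a1 * y) * Ω1 + y * ΩLI))) /
            Real.logb 2 ρ)
        atTop (nhds 0) := by
  simpa only [hsum, one_mul] using fd_far_user_ergodic_rate_direct_high_snr_general
    Ω1 ΩLI hΩ1 hΩLI a1 a2 ha1 (ha1.trans ha12) ξ hξdef hξ hne
end

section
/- Let Ω2 > 0 and let a1, a2 satisfy 0 < a1 < a2 and a1 + a2 = 1. For ρ > 0 define R(ρ) = ( exp(1/(ρ·Ω2)) / (2 ln 2) ) · [ Ei(−1/(ρ·a1·Ω2)) − Ei(−1/(ρ·Ω2)) ] (the high-SNR approximation of the half-duplex ergodic rate of the far user without direct link). Then lim_{ρ→∞} R(ρ) = (1/(2 ln 2)) · ln(1/a1) = (1/2)·log₂(1 + a2/a1); in particular R(ρ) converges to a finite throughput ceiling and lim_{ρ→∞} R(ρ)/log₂ ρ = 0, i.e. the far user's high-SNR slope is 0. -/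
open MeasureTheory Filter Real

/-!
With `x = 1 / (ρ Ω2)`, the difference of exponential integrals in `R ρ` is the integral of
`exp (-t) / t` over `[x, x / a1]`. As `x → 0⁺` the factor `exp (-t)` tends to `1`, while `1 / t`
has the integral `log (1 / a1)` over this interval for every `x`.
-/

open scoped Topology

lemma integrableOn_exp_neg_div_Ioi_s19 {x : ℝ} (hx : 0 < x) :
    IntegrableOn (fun t : ℝ => Real.exp (-t) / t) (Set.Ioi x) := by
  refine (integrableOn_exp_neg_Ioi x).mul_bdd (g := fun t => t⁻¹) (c := x⁻¹)
    measurable_inv.aestronglyMeasurable ?_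
  filter_upwards [ae_restrict_mem measurableSet_Ioi] with t (hxt : x < t)
  rw [norm_inv, Real.norm_of_nonneg (hx.trans hxt).le]
  exact inv_anti₀ hx hxt.le

lemma Ei_neg_sub_Ei_neg_s19 {x y : ℝ} (hx : 0 < x) (hy : 0 < y) :
    Ei (-y) - Ei (-x) = ∫ t in x..y, Real.exp (-t) / t := by
  rw [← intervalIntegral.integral_Ioi_sub_Ioi' (integrableOn_exp_neg_div_Ioi_s19 hx)
    (integrableOn_exp_neg_div_Ioi_s19 hy)]
  simp only [Ei, neg_neg]
  ring

lemma tendsto_Ei_neg_mul_sub_Ei_neg_mul {a b : ℝ} (ha : 0 < a) (hb : 0 < b) :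
    Tendsto (fun x => Ei (-(b * x)) - Ei (-(a * x))) (𝓝[>] 0) (𝓝 (Real.log (b / a))) := by
  have hcont : Continuous fun t : ℝ => Real.exp (-t) := by fun_prop
  have hone : Tendsto (fun t : ℝ => Real.exp (-t)) (𝓝[>] 0) (𝓝 1) := by
    simpa using hcont.continuousWithinAt (s := Set.Ioi 0) (x := 0) |>.tendsto
  have hfrullani := Frullani.tendsto_integral_inv_smul_nhdsWithin
    (hcont.locallyIntegrable.locallyIntegrableOn _) ha hb hone
  rw [smul_eq_mul, mul_one] at hfrullani
  refine hfrullani.congr' ?_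
  filter_upwards [self_mem_nhdsWithin] with x (hx : 0 < x)
  rw [Ei_neg_sub_Ei_neg_s19 (mul_pos ha hx) (mul_pos hb hx)]
  simp only [smul_eq_mul, div_eq_inv_mul]

lemma tendsto_one_div_mul_atTop_nhdsGT_zero {c : ℝ} (hc : 0 < c) :
    Tendsto (fun ρ : ℝ => 1 / (ρ * c)) atTop (𝓝[>] 0) := by
  simpa only [one_div, Function.comp_def, id] using
    tendsto_inv_atTop_nhdsGT_zero.comp (tendsto_id.atTop_mul_const hc)

lemma tendsto_exp_mul_Ei_sub_Ei_atTop {a Ω : ℝ} (ha : 0 < a) (hΩ : 0 < Ω) :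
    Tendsto
      (fun ρ : ℝ => Real.exp (1 / (ρ * Ω)) * (Ei (-(1 / (ρ * a * Ω))) - Ei (-(1 / (ρ * Ω)))))
      atTop (𝓝 (Real.log (1 / a))) := by
  have hinv := tendsto_one_div_mul_atTop_nhdsGT_zero hΩ
  have hexp : Tendsto (fun ρ : ℝ => Real.exp (1 / (ρ * Ω))) atTop (𝓝 1) := by
    simpa using (hinv.mono_right nhdsWithin_le_nhds).rexp
  have hEi := (tendsto_Ei_neg_mul_sub_Ei_neg_mul one_pos (one_div_pos.2 ha)).comp hinv
  have hscale (ρ : ℝ) : 1 / a * (1 / (ρ * Ω)) = 1 / (ρ * a * Ω) := by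
    rw [one_div_mul_one_div, mul_left_comm, mul_assoc]
  simpa only [Function.comp_def, one_mul, div_one, hscale] using hexp.mul hEi

theorem hd_far_user_throughput_ceiling_general
    (Ω2 : ℝ) (hΩ2 : 0 < Ω2)
    (a1 a2 : ℝ) (ha1 : 0 < a1) (hsum : a1 + a2 = 1)
    (R : ℝ → ℝ)
    (hR : ∀ ρ : ℝ, 0 < ρ →
      R ρ = Real.exp (1 / (ρ * Ω2)) / (2 * Real.log 2) *
        (Ei (-(1 / (ρ * a1 * Ω2))) - Ei (-(1 / (ρ * Ω2))))) :
    Tendsto R atTop (nhds (1 / (2 * Real.log 2) * Real.log (1 / a1))) ∧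
      1 / (2 * Real.log 2) * Real.log (1 / a1)
        = 1 / 2 * Real.logb 2 (1 + a2 / a1) ∧
      Tendsto (fun ρ : ℝ => R ρ / Real.logb 2 ρ) atTop (nhds 0) := by
  have hratio : 1 + a2 / a1 = 1 / a1 := by
    rw [one_add_div ha1.ne', hsum]
  have hceiling : Tendsto R atTop (𝓝 (1 / (2 * Real.log 2) * Real.log (1 / a1))) := by
    refine ((tendsto_exp_mul_Ei_sub_Ei_atTop ha1 hΩ2).const_mul (1 / (2 * Real.log 2))).congr' ?_
    filter_upwards [eventually_gt_atTop 0] with ρ hρ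
    rw [hR ρ hρ]
    ring
  refine ⟨hceiling, ?_, hceiling.div_atTop (Real.tendsto_logb_atTop one_lt_two)⟩
  rw [hratio, Real.logb]
  ring

/-- **HD far-user (no direct link) throughput ceiling and zero high-SNR slope.**
The high-SNR approximation of the half-duplex ergodic rate of the far user converges to
`(1/(2 ln 2))·ln(1/a1) = (1/2)·log₂(1 + a2/a1)` as `ρ → ∞`; in particular
`R(ρ)/log₂ ρ → 0`. -/
theorem hd_far_user_throughput_ceiling
    (Ω2 : ℝ) (hΩ2 : 0 < Ω2)
    (a1 a2 : ℝ) (ha1 : 0 < a1) (ha12 : a1 < a2) (hsum : a1 + a2 = 1)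
    (R : ℝ → ℝ)
    (hR : ∀ ρ : ℝ, 0 < ρ →
      R ρ = Real.exp (1 / (ρ * Ω2)) / (2 * Real.log 2) *
        (Ei (-(1 / (ρ * a1 * Ω2))) - Ei (-(1 / (ρ * Ω2))))) :
    Tendsto R atTop (nhds (1 / (2 * Real.log 2) * Real.log (1 / a1))) ∧
      1 / (2 * Real.log 2) * Real.log (1 / a1)
        = 1 / 2 * Real.logb 2 (1 + a2 / a1) ∧
      Tendsto (fun ρ : ℝ => R ρ / Real.logb 2 ρ) atTop (nhds 0) :=
  hd_far_user_throughput_ceiling_general Ω2 hΩ2 a1 a2 ha1 hsum R hR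
end
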